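/- Let Ω be an unbounded domain in ℂⁿ. If there exists a bounded continuous positive plurisubharmonic function φ on Ω with φ(z) → 0 as ‖z‖ → ∞ (a strong antipeak function at infinity), then Ω is Kobayashi hyperbolic. -/

import Mathlib

open Metric Set

noncomputable def kob {E : Type*} [NormedAddCommGroup E] [NormedSpace ℂ E]
    (Ω : Set E) (z v : E) : ℝ :=
  sInf {c : ℝ | ∃ r : ℝ, 0 < r ∧ c = 1 / r ∧ ∃ f : ℂ → E,
    DifferentiableOn ℂ f (ball (0 : ℂ) r) ∧ f 0 = z ∧ deriv f 0 = v ∧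
    MapsTo f (ball (0 : ℂ) r) Ω}

/-- A set `Ω` is Kobayashi hyperbolic if around every point the Kobayashi
pseudometric admits a positive lower bound comparable to the norm. -/
def KobayashiHyperbolic {E : Type*} [NormedAddCommGroup E] [NormedSpace ℂ E]
    (Ω : Set E) : Prop :=
  ∀ p ∈ Ω, ∃ U ∈ nhds p, ∃ c > 0, ∀ q ∈ U ∩ Ω, ∀ v : E, c * ‖v‖ ≤ kob Ω q v

/-- Sub-mean value inequality on all closed disks contained in `S`. -/
def SubmeanOn (u : ℂ → ℝ) (S : Set ℂ) : Prop :=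
  ∀ c : ℂ, ∀ s : ℝ, 0 < s → closedBall c s ⊆ S →
    u c ≤ (2 * Real.pi)⁻¹ *
      ∫ θ in (0 : ℝ)..(2 * Real.pi), u (c + (s : ℂ) * Complex.exp ((θ : ℂ) * Complex.I))

def SubharmonicOn (u : ℂ → ℝ) (S : Set ℂ) : Prop :=
  UpperSemicontinuousOn u S ∧ SubmeanOn u S

/-- Plurisubharmonic: upper semicontinuous and subharmonic on every complex line. -/
def PSHOn {E : Type*} [NormedAddCommGroup E] [NormedSpace ℂ E]
    (u : E → ℝ) (Ω : Set E) : Prop :=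
  UpperSemicontinuousOn u Ω ∧
    ∀ a b : E, SubmeanOn (fun lam : ℂ => u (a + lam • b)) {lam : ℂ | a + lam • b ∈ Ω}

open Filter Topology MeasureTheory InnerProductSpace
open scoped Convolution

/-!
Fix `p ∈ Ω`, choose `α < β < φ p` such that `φ ≤ α` far away and `β < φ` near `p`, and let `q` be
close to `p`. For large `C` the function equal to `C φ + log ‖· - q‖` near `q` and to a constant far
from `q`, with the maximum of the two in between, is a plurisubharmonic function with a logarithmic
pole at `q`: the first branch is larger on a small sphere around `q` because `φ` is large there, the
constant is larger on a big sphere because `φ` is small there. Composing with a holomorphic disc `f`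
centred at `q` and subtracting `log |·|` leaves a bounded subharmonic function whose value at the
centre is at least `C β + log ‖f' 0‖`, so the maximum principle bounds `‖f' 0‖` uniformly in `q`.

The maximum principle is applied to both branches simultaneously, and sub-mean value inequalities
are only required up to `o(t²)`. With this tolerance, passing from complex lines to holomorphic
discs is a first order Taylor expansion as soon as `φ` is `C¹`; mollification reduces to that case.
-/

lemma isBigO_sub_tangent_of_analyticAt {𝕜 E : Type*} [NontriviallyNormedField 𝕜]
    [NormedAddCommGroup E] [NormedSpace 𝕜 E] {f : 𝕜 → E} {z₀ : 𝕜} (hf : AnalyticAt 𝕜 f z₀) :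
    (fun z => f z - (f z₀ + (z - z₀) • deriv f z₀)) =O[𝓝 z₀] fun z => ‖z - z₀‖ ^ 2 := by
  obtain ⟨p, hp⟩ := hf
  have htaylor : (fun y => f (z₀ + y) - (f z₀ + y • deriv f z₀)) =O[𝓝 0] fun y => ‖y‖ ^ 2 := by
    have hcoeff : p.coeff 0 = f z₀ := hp.coeff_zero 1
    simpa [FormalMultilinearSeries.partialSum, Finset.sum_range_succ, hp.deriv, hcoeff]
      using hp.isBigO_sub_partialSum_pow 2
  have htranslate : Tendsto (fun z => z - z₀) (𝓝 z₀) (𝓝 0) := by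
    simpa using (continuous_sub_right z₀).tendsto z₀
  simpa only [Function.comp_def, add_sub_cancel] using htaylor.comp_tendsto htranslate

section AsympSubmean

variable {u v w : ℂ → ℝ} {z₀ : ℂ}

/-- The infinitesimal sub-mean value property of Blaschke and Privalov at `z₀`: circle averages of
radius `t` are at least `u z₀ - o(t²)`. Unlike the exact inequality it is insensitive to errors of
order `o(t²)`, hence to replacing a holomorphic disc by its tangent line. Continuity near `z₀` is
included so that small circle averages are not junk values. -/
structure AsympSubmeanAt (u : ℂ → ℝ) (z₀ : ℂ) : Prop where
  eventually_continuousAt : ∀ᶠ z in 𝓝 z₀, ContinuousAt u z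
  eventually_sub_le_circleAverage :
    ∀ k > 0, ∀ᶠ t in 𝓝[>] (0 : ℝ), u z₀ - k * t ^ 2 ≤ Real.circleAverage u z₀ t

lemma eventually_forall_closedBall_of_eventually_nhds {p : ℂ → Prop} (h : ∀ᶠ z in 𝓝 z₀, p z) :
    ∀ᶠ t in 𝓝[>] (0 : ℝ), ∀ z ∈ closedBall z₀ |t|, p z := by
  filter_upwards [nhdsWithin_le_nhds (eventually_closedBall_subset h), self_mem_nhdsWithin]
    with t ht ht0 z hz
  exact ht (by rwa [abs_of_pos ht0] at hz)

lemma eventually_circleIntegrable (h : ∀ᶠ z in 𝓝 z₀, ContinuousAt u z) :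
    ∀ᶠ t in 𝓝[>] (0 : ℝ), CircleIntegrable u z₀ t := by
  filter_upwards [eventually_forall_closedBall_of_eventually_nhds h] with t ht
  exact ContinuousOn.circleIntegrable' fun z hz =>
    (ht z (sphere_subset_closedBall hz)).continuousWithinAt

lemma circleAverage_mono_of_add_mul_sq_le {r k : ℝ} (hu : CircleIntegrable u z₀ r)
    (hv : CircleIntegrable v z₀ r) (h : ∀ z ∈ sphere z₀ |r|, u z + k * ‖z - z₀‖ ^ 2 ≤ v z) :
    Real.circleAverage u z₀ r + k * r ^ 2 ≤ Real.circleAverage v z₀ r := by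
  have hconst : CircleIntegrable (fun _ : ℂ => k * r ^ 2) z₀ r := circleIntegrable_const _ _ _
  calc Real.circleAverage u z₀ r + k * r ^ 2
      = Real.circleAverage (fun z => u z + k * r ^ 2) z₀ r := by
        rw [Real.circleAverage_fun_add hu hconst, Real.circleAverage_const]
    _ ≤ Real.circleAverage v z₀ r := Real.circleAverage_mono (hu.add hconst) hv fun z hz => by
        simpa only [mem_sphere_iff_norm.1 hz, sq_abs] using h z hz

namespace AsympSubmeanAt

lemma of_le_add_mul_sq (hu : AsympSubmeanAt u z₀) (hv : ∀ᶠ z in 𝓝 z₀, ContinuousAt v z)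
    (hle : ∀ ε > 0, ∀ᶠ z in 𝓝 z₀, u z ≤ v z + ε * ‖z - z₀‖ ^ 2) (heq : v z₀ = u z₀) :
    AsympSubmeanAt v z₀ := by
  refine ⟨hv, fun k hk => ?_⟩
  filter_upwards [eventually_circleIntegrable hu.eventually_continuousAt,
    eventually_circleIntegrable hv, hu.eventually_sub_le_circleAverage (k / 2) (by positivity),
    eventually_forall_closedBall_of_eventually_nhds (hle (k / 2) (by positivity))]
    with t hui hvi hut hlet
  have := circleAverage_mono_of_add_mul_sq_le (k := -(k / 2)) hui hvi fun z hz => by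
    linarith [hlet z (sphere_subset_closedBall hz)]
  linarith

lemma of_eventually_le (hu : AsympSubmeanAt u z₀) (hv : ∀ᶠ z in 𝓝 z₀, ContinuousAt v z)
    (hle : ∀ᶠ z in 𝓝 z₀, u z ≤ v z) (heq : v z₀ = u z₀) : AsympSubmeanAt v z₀ :=
  hu.of_le_add_mul_sq hv
    (fun ε hε => hle.mono fun z hz => hz.trans (le_add_of_nonneg_right (by positivity))) heq

lemma add (hu : AsympSubmeanAt u z₀) (hv : AsympSubmeanAt v z₀) :
    AsympSubmeanAt (fun z => u z + v z) z₀ := by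
  refine ⟨?_, fun k hk => ?_⟩
  · filter_upwards [hu.eventually_continuousAt, hv.eventually_continuousAt] with z huz hvz
    exact huz.add hvz
  · filter_upwards [eventually_circleIntegrable hu.eventually_continuousAt,
      eventually_circleIntegrable hv.eventually_continuousAt,
      hu.eventually_sub_le_circleAverage (k / 2) (by positivity),
      hv.eventually_sub_le_circleAverage (k / 2) (by positivity)] with t hui hvi hut hvt
    rw [Real.circleAverage_fun_add hui hvi]
    linarith

lemma of_harmonicAt (hu : HarmonicAt u z₀) : AsympSubmeanAt u z₀ := by
  refine ⟨hu.eventually.mono fun z hz => hz.1.continuousAt, fun k hk => ?_⟩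
  filter_upwards [eventually_forall_closedBall_of_eventually_nhds hu.eventually] with t ht
  rw [InnerProductSpace.HarmonicOnNhd.circleAverage_eq ht]
  exact sub_le_self _ (by positivity)

lemma not_isLocalMax_add_mul_norm_sq (hu : AsympSubmeanAt u z₀) {κ : ℝ} (hκ : 0 < κ) :
    ¬ IsLocalMax (fun z => u z + κ * ‖z‖ ^ 2) z₀ := by
  intro hmax
  -- `‖z‖² - ‖z - z₀‖²` is harmonic, so circle averages of `‖z‖²` exceed `‖z₀‖²` by exactly `t²`.
  have hharm : HarmonicAt (fun z => (κ * (starRingEnd ℂ z₀ * (2 * z - z₀))).re) z₀ :=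
    AnalyticAt.harmonicAt_re (by fun_prop)
  have hre : ∀ z : ℂ, (κ * (starRingEnd ℂ z₀ * (2 * z - z₀))).re
      = κ * (‖z‖ ^ 2 - ‖z - z₀‖ ^ 2) := fun z => by
    simp only [← Complex.normSq_eq_norm_sq, Complex.normSq_apply, Complex.mul_re, Complex.mul_im,
      Complex.sub_re, Complex.sub_im, Complex.conj_re, Complex.conj_im, Complex.ofReal_re,
      Complex.ofReal_im, Complex.re_ofNat, Complex.im_ofNat]
    ring
  have hw := hu.add (of_harmonicAt hharm)
  simp only [hre] at hw
  obtain ⟨t, hwi, hwt, hle, ht⟩ := ((eventually_circleIntegrable hw.eventually_continuousAt).and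
    ((hw.eventually_sub_le_circleAverage (κ / 2) (by positivity)).and
      ((eventually_forall_closedBall_of_eventually_nhds hmax).and self_mem_nhdsWithin))).exists
  have havg := circleAverage_mono_of_add_mul_sq_le (k := κ) hwi
    (circleIntegrable_const (u z₀ + κ * ‖z₀‖ ^ 2) z₀ t)
    fun z hz => by linarith [hle z (sphere_subset_closedBall hz)]
  rw [Real.circleAverage_const] at havg
  have : 0 < κ * t ^ 2 := mul_pos hκ (pow_pos ht 2)
  norm_num at hwt
  linarith

lemma not_isLocalMax_mul_exp_norm_sq (hu : AsympSubmeanAt (fun z => Real.log (u z)) z₀)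
    (hcont : ContinuousAt u z₀) (hpos : 0 < u z₀) {κ : ℝ} (hκ : 0 < κ) :
    ¬ IsLocalMax (fun z => u z * Real.exp (κ * ‖z‖ ^ 2)) z₀ := by
  have hlog : ∀ z, 0 < u z →
      Real.log (u z * Real.exp (κ * ‖z‖ ^ 2)) = Real.log (u z) + κ * ‖z‖ ^ 2 := fun z hz => by
    rw [Real.log_mul hz.ne' (Real.exp_pos _).ne', Real.log_exp]
  intro hmax
  refine hu.not_isLocalMax_add_mul_norm_sq hκ ?_
  filter_upwards [hmax, hcont.eventually_const_lt hpos] with z hz hz_pos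
  rw [← hlog z hz_pos, ← hlog z₀ hpos]
  exact Real.log_le_log (by positivity) hz

lemma log_norm_of_analyticAt {E : Type*} [NormedAddCommGroup E] [NormedSpace ℂ E] [CompleteSpace E]
    {g : ℂ → E} (hg : AnalyticAt ℂ g z₀) (hg₀ : g z₀ ≠ 0) :
    AsympSubmeanAt (fun z => Real.log ‖g z‖) z₀ := by
  -- For a functional `ℓ` norming `g z₀`, the harmonic function `log |ℓ ∘ g|` touches `log ‖g‖` from
  -- below at `z₀`.
  obtain ⟨ℓ, hℓ, hℓg⟩ := exists_dual_vector ℂ (g z₀) (norm_ne_zero_iff.2 hg₀)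
  have hharm : HarmonicAt (fun z => Real.log ‖ℓ (g z)‖) z₀ :=
    ((ℓ.analyticAt _).comp hg).harmonicAt_log_norm (by simpa [hℓg] using hg₀)
  have hne : ∀ᶠ z in 𝓝 z₀, ℓ (g z) ≠ 0 :=
    (ℓ.continuous.continuousAt.comp hg.continuousAt).eventually_ne (by simpa [hℓg] using hg₀)
  refine (of_harmonicAt hharm).of_eventually_le ?_ ?_ ?_
  · filter_upwards [hg.eventually_analyticAt, hne] with z hz hzne
    exact hz.continuousAt.norm.log (norm_ne_zero_iff.2 fun h => hzne (by simp [h]))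
  · filter_upwards [hne] with z hz
    refine Real.log_le_log (norm_pos_iff.2 hz) ?_
    simpa only [hℓ, one_mul] using ℓ.le_opNorm (g z)
  · simp [hℓg]

lemma log_mul_norm_of_analyticAt {E : Type*} [NormedAddCommGroup E] [NormedSpace ℂ E]
    [CompleteSpace E] {g : ℂ → E} (hu : AsympSubmeanAt (fun z => Real.log (u z)) z₀)
    (hu_cont : ∀ᶠ z in 𝓝 z₀, ContinuousAt u z) (hu_pos : 0 < u z₀) (hg : AnalyticAt ℂ g z₀)
    (hg₀ : g z₀ ≠ 0) : AsympSubmeanAt (fun z => Real.log (u z * ‖g z‖)) z₀ := by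
  have hsum := hu.add (log_norm_of_analyticAt hg hg₀)
  have hlog : ∀ᶠ z in 𝓝 z₀, Real.log (u z) + Real.log ‖g z‖ = Real.log (u z * ‖g z‖) := by
    filter_upwards [hu_cont.self_of_nhds.eventually_const_lt hu_pos,
      hg.continuousAt.eventually_ne hg₀] with z hz hgz
    exact (Real.log_mul hz.ne' (norm_ne_zero_iff.2 hgz)).symm
  refine hsum.of_eventually_le ?_ (hlog.mono fun z hz => hz.le) hlog.self_of_nhds.symm
  filter_upwards [hsum.eventually_continuousAt, hlog.eventually_nhds] with z hz hz_log
  exact hz.congr hz_log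

lemma comp_analyticAt {E : Type*} [NormedAddCommGroup E] [NormedSpace ℂ E] [CompleteSpace E]
    {ψ : E → ℝ} {f : ℂ → E} (hψ : ContDiff ℝ 1 ψ) (hf : AnalyticAt ℂ f z₀)
    (htan : AsympSubmeanAt (fun z => ψ (f z₀ + (z - z₀) • deriv f z₀)) z₀) :
    AsympSubmeanAt (fun z => ψ (f z)) z₀ := by
  set T : ℂ → E := fun z => f z₀ + (z - z₀) • deriv f z₀ with hT
  have hTz₀ : T z₀ = f z₀ := by simp [hT]
  have hTan : AnalyticAt ℂ T z₀ := by fun_prop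
  let D := fderiv ℝ ψ (f z₀)
  have hharm : HarmonicAt (fun z => D (f z - T z)) z₀ := (hf.sub hTan).harmonicAt.comp_CLM D
  have hremainder : (fun z => f z - T z) =O[𝓝 z₀] fun z => ‖z - z₀‖ ^ 2 :=
    isBigO_sub_tangent_of_analyticAt hf
  have hlin : (fun z => ψ (f z) - ψ (T z) - D (f z - T z)) =o[𝓝 z₀] fun z => ‖z - z₀‖ ^ 2 := by
    have hpair : Tendsto (fun z => (f z, T z)) (𝓝 z₀) (𝓝 (f z₀, f z₀)) := by
      simpa only [hTz₀] using hf.continuousAt.prodMk_nhds hTan.continuousAt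
    exact ((hψ.contDiffAt.hasStrictFDerivAt one_ne_zero).isLittleO.comp_tendsto hpair).trans_isBigO
      hremainder
  refine (htan.add (of_harmonicAt hharm)).of_le_add_mul_sq ?_ (fun ε hε => ?_) (by simp [hTz₀])
  · filter_upwards [hf.eventually_analyticAt] with z hz
    exact hψ.continuous.continuousAt.comp hz.continuousAt
  · filter_upwards [hlin.bound hε] with z hz
    rw [Real.norm_eq_abs, norm_pow, norm_norm] at hz
    linarith [neg_le_of_abs_le hz]

end AsympSubmeanAt
end AsympSubmean

section MaximumPrinciple

/-- The maximum principle for `max_i P i` where each `P i` is only relevant on `K i`. -/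
theorem le_of_forall_asympSubmeanAt_log_or_lt {ι : Type*} [Finite ι] {K : ι → Set ℂ}
    {P : ι → ℂ → ℝ} {N : ℝ} (hN : 0 ≤ N) (hK : ∀ i, IsCompact (K i))
    (hP : ∀ i, ContinuousOn (P i) (K i))
    (h : ∀ i, ∀ z ∈ K i, N < P i z →
      (K i ∈ 𝓝 z ∧ AsympSubmeanAt (fun w => Real.log (P i w)) z) ∨ ∃ j, z ∈ K j ∧ P i z < P j z)
    (i : ι) {z : ℂ} (hz : z ∈ K i) : P i z ≤ N := by
  by_contra! hlt
  obtain ⟨S, hS⟩ := (isCompact_iUnion hK).isBounded.exists_norm_le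
  have hS' : ∀ j, ∀ w ∈ K j, ‖w‖ ≤ S := fun j w hw => hS w (mem_iUnion_of_mem j hw)
  obtain ⟨κ, hκ, hκN⟩ : ∃ κ > 0, N * Real.exp (κ * S ^ 2) < P i z := by
    have hcont : ContinuousAt (fun κ : ℝ => N * Real.exp (κ * S ^ 2)) 0 := by fun_prop
    have hev : ∀ᶠ κ in 𝓝[>] (0 : ℝ), N * Real.exp (κ * S ^ 2) < P i z :=
      nhdsWithin_le_nhds (hcont.eventually_lt_const (by simpa using hlt))
    exact (eventually_mem_nhdsWithin.and hev).exists
  set F : ι → ℂ → ℝ := fun j w => P j w * Real.exp (κ * ‖w‖ ^ 2) with hF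
  have hFK : IsCompact (⋃ j, F j '' K j) := isCompact_iUnion fun j =>
    (hK j).image_of_continuousOn ((hP j).mul (by fun_prop))
  obtain ⟨_, hmem, hmax⟩ := hFK.exists_isGreatest ⟨_, mem_iUnion_of_mem i ⟨z, hz, rfl⟩⟩
  obtain ⟨j, w, hw, rfl⟩ := mem_iUnion.1 hmem
  have hFle : ∀ j', ∀ w' ∈ K j', F j' w' ≤ F j w := fun j' w' hw' =>
    hmax (mem_iUnion_of_mem j' ⟨w', hw', rfl⟩)
  have hlt_w : N * Real.exp (κ * S ^ 2) < F j w :=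
    calc N * Real.exp (κ * S ^ 2) < P i z := hκN
      _ ≤ F i z := le_mul_of_one_le_right (hN.trans hlt.le) (Real.one_le_exp (by positivity))
      _ ≤ F j w := hFle i z hz
  have hNw : N < P j w := by
    by_contra! hle
    refine hlt_w.not_ge (mul_le_mul hle ?_ (Real.exp_pos _).le hN)
    gcongr
    exact hS' j w hw
  rcases h j w hw hNw with ⟨hKw, hsub⟩ | ⟨j', hj', hlt'⟩
  · refine hsub.not_isLocalMax_mul_exp_norm_sq ((hP j).continuousAt hKw) (hN.trans_lt hNw) hκ ?_
    filter_upwards [hKw] with w' hw' using hFle j w' hw'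
  · exact (hFle j' w hj').not_gt (by simp only [hF]; gcongr)

end MaximumPrinciple

section DiscEstimate

variable {E : Type*} [NormedAddCommGroup E] {f : ℂ → E} {w : ℂ → ℝ} {s r R κ N : ℝ}

/-- The parts of the disc of radius `s` on which the two branches of `discBranch` are used; they
overlap where `r ≤ ‖f z - f 0‖ ≤ R`. -/
def discPart (f : ℂ → E) (s r R : ℝ) : Fin 2 → Set ℂ :=
  ![{z ∈ closedBall 0 s | ‖f z - f 0‖ ≤ R}, {z ∈ closedBall 0 s | r ≤ ‖f z - f 0‖}]

lemma isCompact_discPart (hf : ContinuousOn f (closedBall 0 s)) (i : Fin 2) :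
    IsCompact (discPart f s r R i) := by
  have hnorm : ContinuousOn (fun z => ‖f z - f 0‖) (closedBall 0 s) :=
    (hf.sub continuousOn_const).norm
  fin_cases i
  · exact (isCompact_closedBall 0 s).of_isClosed_subset
      (hnorm.preimage_isClosed_of_isClosed isClosed_closedBall isClosed_Iic) inter_subset_left
  · exact (isCompact_closedBall 0 s).of_isClosed_subset
      (hnorm.preimage_isClosed_of_isClosed isClosed_closedBall isClosed_Ici) inter_subset_left

variable [NormedSpace ℂ E]

lemma norm_dslope_of_ne {a z : ℂ} (hz : z ≠ a) :
    ‖dslope f a z‖ = ‖f z - f a‖ / ‖z - a‖ := by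
  rw [dslope_of_ne _ hz, slope_def_module, norm_smul, norm_inv, inv_mul_eq_div]

lemma asympSubmeanAt_log_const_div_norm (hκ : 0 < κ) {z : ℂ} (hz : z ≠ 0) :
    AsympSubmeanAt (fun ζ : ℂ => Real.log (κ / ‖ζ‖)) z := by
  have han : AnalyticAt ℂ (fun ζ : ℂ => (κ : ℂ) / ζ) z := analyticAt_const.div analyticAt_id hz
  simpa [abs_of_pos hκ] using
    AsympSubmeanAt.log_norm_of_analyticAt han (div_ne_zero (by exact_mod_cast hκ.ne') hz)

/-- Away from `0` these are the two branches of `max (w z * ‖f z - f 0‖) κ / ‖z‖`; the singularity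
of the first one at `0` is removed. -/
noncomputable def discBranch (f : ℂ → E) (w : ℂ → ℝ) (κ : ℝ) : Fin 2 → ℂ → ℝ :=
  ![fun z => w z * ‖dslope f 0 z‖, fun z => κ / ‖z‖]

lemma discBranch_zero_of_ne {z : ℂ} (hz : z ≠ 0) :
    discBranch f w κ 0 z = w z * ‖f z - f 0‖ / ‖z‖ := by
  simp [discBranch, norm_dslope_of_ne hz, mul_div_assoc]

lemma continuousOn_discBranch (hs : 0 < s) (hf : DiffContOnCl ℂ f (ball 0 s))
    (hw : ContinuousOn w (closedBall 0 s)) (hr : 0 < r) (i : Fin 2) :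
    ContinuousOn (discBranch f w κ i) (discPart f s r R i) := by
  fin_cases i
  · have hdslope : ContinuousOn (dslope f 0) (closedBall 0 s) :=
      (continuousOn_dslope (closedBall_mem_nhds 0 hs)).2
        ⟨hf.continuousOn_ball, hf.differentiableAt isOpen_ball (mem_ball_self hs)⟩
    exact (hw.mul hdslope.norm).mono inter_subset_left
  · refine continuousOn_const.div continuousOn_id.norm ?_
    rintro z ⟨-, hz⟩ hz₀
    obtain rfl : z = 0 := norm_eq_zero.1 hz₀
    exact (sub_self (f 0) ▸ hz).not_gt (by simpa using hr)

lemma mem_nhds_discPart_or_discBranch_zero_lt [CompleteSpace E] (hs : 0 < s)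
    (hf : DiffContOnCl ℂ f (ball 0 s)) (hw_cont : ContinuousOn w (closedBall 0 s))
    (hw_pos : ∀ z, 0 < w z)
    (hw_sub : ∀ z ∈ ball 0 s, AsympSubmeanAt (fun z => Real.log (w z)) z)
    (hR : 0 < R) (hrR : r ≤ R) (hN : 0 ≤ N)
    (hwR : ∀ z ∈ closedBall 0 s, ‖f z - f 0‖ = R → w z * R < κ)
    (hwN : ∀ z ∈ closedBall 0 s, w z * R ≤ N) {z : ℂ} (hz : z ∈ discPart f s r R 0)
    (hlt : N / s < discBranch f w κ 0 z) :
    (discPart f s r R 0 ∈ 𝓝 z ∧ AsympSubmeanAt (fun ζ => Real.log (discBranch f w κ 0 ζ)) z) ∨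
      z ∈ discPart f s r R 1 ∧ discBranch f w κ 0 z < discBranch f w κ 1 z := by
  obtain ⟨hzs, hzR⟩ : z ∈ closedBall 0 s ∧ ‖f z - f 0‖ ≤ R := hz
  have hz_lt : ‖z‖ < s := by
    refine lt_of_le_of_ne (mem_closedBall_zero_iff.1 hzs) fun heq => hlt.not_ge ?_
    rw [discBranch_zero_of_ne (norm_pos_iff.1 (heq ▸ hs)), heq]
    gcongr
    exact (mul_le_mul_of_nonneg_left hzR (hw_pos z).le).trans (hwN z hzs)
  have hball : ball (0 : ℂ) s ∈ 𝓝 z := isOpen_ball.mem_nhds (mem_ball_zero_iff.2 hz_lt)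
  rcases hzR.lt_or_eq with hzR_lt | hzR_eq
  · left
    have hdslope : AnalyticAt ℂ (dslope f 0) z :=
      ((Complex.differentiableOn_dslope (ball_mem_nhds 0 hs)).2
        hf.differentiableOn).analyticAt hball
    have hne : dslope f 0 z ≠ 0 := fun h =>
      (div_nonneg hN hs.le).not_gt (by simpa [discBranch, h] using hlt)
    refine ⟨?_, (hw_sub z (mem_of_mem_nhds hball)).log_mul_norm_of_analyticAt ?_ (hw_pos z)
      hdslope hne⟩
    · have hcont : ContinuousAt (fun ζ => ‖f ζ - f 0‖) z :=
        ((hf.differentiableAt isOpen_ball (mem_of_mem_nhds hball)).continuousAt.sub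
          continuousAt_const).norm
      filter_upwards [hball, hcont.eventually_lt_const hzR_lt] with ζ hζ hζR
      exact ⟨ball_subset_closedBall hζ, hζR.le⟩
    · filter_upwards [isOpen_ball.mem_nhds (mem_of_mem_nhds hball)] with ζ hζ
      exact hw_cont.continuousAt (mem_of_superset (isOpen_ball.mem_nhds hζ) ball_subset_closedBall)
  · right
    have hz₀ : z ≠ 0 := by
      rintro rfl
      exact hR.ne (by simpa using hzR_eq)
    refine ⟨⟨hzs, hrR.trans hzR_eq.ge⟩, ?_⟩
    rw [discBranch_zero_of_ne hz₀, hzR_eq]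
    exact div_lt_div_of_pos_right (hwR z hzs hzR_eq) (norm_pos_iff.2 hz₀)

lemma mem_nhds_discPart_or_discBranch_one_lt (hs : 0 < s) (hf : DiffContOnCl ℂ f (ball 0 s))
    (hr : 0 < r) (hrR : r ≤ R) (hκ : 0 < κ) (hκN : κ ≤ N)
    (hwr : ∀ z ∈ closedBall 0 s, ‖f z - f 0‖ = r → κ < w z * r) {z : ℂ}
    (hz : z ∈ discPart f s r R 1) (hlt : N / s < discBranch f w κ 1 z) :
    (discPart f s r R 1 ∈ 𝓝 z ∧ AsympSubmeanAt (fun ζ => Real.log (discBranch f w κ 1 ζ)) z) ∨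
      z ∈ discPart f s r R 0 ∧ discBranch f w κ 1 z < discBranch f w κ 0 z := by
  obtain ⟨hzs, hzr⟩ : z ∈ closedBall 0 s ∧ r ≤ ‖f z - f 0‖ := hz
  have hz₀ : z ≠ 0 := by
    rintro rfl
    exact hr.not_ge (by simpa using hzr)
  have hz_lt : z ∈ ball 0 s := by
    refine mem_ball_zero_iff.2 (lt_of_le_of_ne (mem_closedBall_zero_iff.1 hzs) fun heq => ?_)
    refine hlt.not_ge ?_
    change κ / ‖z‖ ≤ N / s
    rw [heq]
    gcongr
  rcases hzr.lt_or_eq with hzr_lt | hzr_eq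
  · left
    refine ⟨?_, asympSubmeanAt_log_const_div_norm hκ hz₀⟩
    have hcont : ContinuousAt (fun ζ => ‖f ζ - f 0‖) z :=
      ((hf.differentiableAt isOpen_ball hz_lt).continuousAt.sub continuousAt_const).norm
    filter_upwards [isOpen_ball.mem_nhds hz_lt, hcont.eventually_const_lt hzr_lt] with ζ hζ hζr
    exact ⟨ball_subset_closedBall hζ, hζr.le⟩
  · right
    refine ⟨⟨hzs, hzr_eq.ge.trans hrR⟩, ?_⟩
    rw [discBranch_zero_of_ne hz₀, ← hzr_eq]
    exact div_lt_div_of_pos_right (hwr z hzs hzr_eq.symm) (norm_pos_iff.2 hz₀)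

theorem mul_norm_deriv_mul_le_of_weight [CompleteSpace E] (hs : 0 < s)
    (hf : DiffContOnCl ℂ f (ball 0 s))
    (hw_cont : ContinuousOn w (closedBall 0 s)) (hw_pos : ∀ z, 0 < w z)
    (hw_sub : ∀ z ∈ ball 0 s, AsympSubmeanAt (fun z => Real.log (w z)) z)
    (hr : 0 < r) (hrR : r ≤ R) (hκ : 0 < κ) (hκN : κ ≤ N)
    (hwr : ∀ z ∈ closedBall 0 s, ‖f z - f 0‖ = r → κ < w z * r)
    (hwR : ∀ z ∈ closedBall 0 s, ‖f z - f 0‖ = R → w z * R < κ)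
    (hwN : ∀ z ∈ closedBall 0 s, w z * R ≤ N) :
    w 0 * ‖deriv f 0‖ * s ≤ N := by
  have hR := hr.trans_le hrR
  have hN := hκ.le.trans hκN
  have hmem : 0 ∈ discPart f s r R 0 := ⟨mem_closedBall_self hs.le, by simpa using hR.le⟩
  have hmax : discBranch f w κ 0 0 ≤ N / s := by
    refine le_of_forall_asympSubmeanAt_log_or_lt (div_nonneg hN hs.le)
      (isCompact_discPart hf.continuousOn_ball) (continuousOn_discBranch hs hf hw_cont hr)
      (Fin.forall_fin_two.2 ⟨fun z hz hlt => ?_, fun z hz hlt => ?_⟩) 0 hmem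
    · exact (mem_nhds_discPart_or_discBranch_zero_lt hs hf hw_cont hw_pos hw_sub hR hrR hN hwR hwN
        hz hlt).imp_right fun h => ⟨1, h⟩
    · exact (mem_nhds_discPart_or_discBranch_one_lt hs hf hr hrR hκ hκN hwr hz hlt).imp_right
        fun h => ⟨0, h⟩
  rw [← le_div_iff₀ hs]
  simpa [discBranch] using hmax

end DiscEstimate

section Smoothing

section Indicator

variable {X : Type*} [TopologicalSpace X] {S : Set X}

lemma measurable_indicator_of_continuousOn [MeasurableSpace X] [OpensMeasurableSpace X]
    {Y : Type*} [TopologicalSpace Y] [MeasurableSpace Y] [BorelSpace Y] [Zero Y] {φ : X → Y}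
    (hφ : ContinuousOn φ S) (hS : MeasurableSet S) : Measurable (S.indicator φ) := by
  classical
  rw [← piecewise_eq_indicator]
  exact hφ.measurable_piecewise continuousOn_const hS

lemma exists_norm_indicator_le_of_continuousOn {Y : Type*} [SeminormedAddCommGroup Y]
    {φ : X → Y} (hφ : ContinuousOn φ S) (hS : IsCompact S) : ∃ M, ∀ x, ‖S.indicator φ x‖ ≤ M := by
  obtain ⟨M, hM⟩ := hS.exists_bound_of_continuousOn hφ
  exact ⟨max M 0, fun x => by
    by_cases hx : x ∈ S
    · simpa only [indicator_of_mem hx] using (hM x hx).trans (le_max_left M 0)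
    · simp [indicator_of_notMem hx]⟩

end Indicator

section Convolution

variable {E : Type*} [NormedAddCommGroup E] [MeasurableSpace E] [BorelSpace E]
  [SecondCountableTopology E] {μ : Measure E} [SFinite μ] {ρ g : E → ℝ} {M t : ℝ} {z₀ : ℂ}
  {γ : ℂ → E}

lemma integrable_prod_mul_comp_sub {X : Type*} [MeasurableSpace X] {ν : Measure X}
    [IsFiniteMeasure ν] {c : X → E} (hρ : Integrable ρ μ) (hg : Measurable g)
    (hgM : ∀ x, ‖g x‖ ≤ M) (hc : Measurable c) :
    Integrable (Function.uncurry fun x y => ρ y * g (c x - y)) (ν.prod μ) :=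
  (hρ.comp_snd _).mul_bdd
    (hg.comp ((hc.comp measurable_fst).sub measurable_snd)).aestronglyMeasurable
    (Eventually.of_forall fun _ => hgM _)

lemma convolution_le_circleAverage_convolution (hρ : Integrable ρ μ) (hρ_nonneg : 0 ≤ ρ)
    (hg : Measurable g) (hgM : ∀ x, ‖g x‖ ≤ M) (hγ : Continuous γ) {x : E}
    (h : ∀ y ∈ Function.support ρ, g (x - y) ≤ Real.circleAverage (fun z => g (γ z - y)) z₀ t) :
    (ρ ⋆[ContinuousLinearMap.lsmul ℝ ℝ, μ] g) x ≤
      Real.circleAverage (fun z => (ρ ⋆[ContinuousLinearMap.lsmul ℝ ℝ, μ] g) (γ z)) z₀ t := by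
  have hfin : IsFiniteMeasure (volume.restrict (uIoc 0 (2 * Real.pi))) := ⟨by simp [uIoc]⟩
  have hint := integrable_prod_mul_comp_sub (ν := volume.restrict (uIoc 0 (2 * Real.pi)))
    (c := fun θ => γ (circleMap z₀ t θ)) hρ hg hgM (Continuous.measurable (by fun_prop))
  have hpull : ∀ y, ρ y * Real.circleAverage (fun z => g (γ z - y)) z₀ t =
      (2 * Real.pi)⁻¹ * ∫ θ in 0..2 * Real.pi, ρ y * g (γ (circleMap z₀ t θ) - y) := fun y => by
    rw [Real.circleAverage_def, smul_eq_mul, intervalIntegral.integral_const_mul, mul_left_comm]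
  have hfubini : Real.circleAverage
      (fun z => (ρ ⋆[ContinuousLinearMap.lsmul ℝ ℝ, μ] g) (γ z)) z₀ t =
        ∫ y, ρ y * Real.circleAverage (fun z => g (γ z - y)) z₀ t ∂μ := by
    simp only [hpull, integral_const_mul, ← intervalIntegral_integral_swap hint]
    rfl
  rw [hfubini]
  refine integral_mono (hρ.mul_bdd (c := M) ?_ (Eventually.of_forall fun y => hgM _)) ?_
    fun y => ?_
  · exact (hg.comp (measurable_const.sub measurable_id)).aestronglyMeasurable
  · simp only [hpull, intervalIntegral.integral_of_le Real.two_pi_pos.le,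
      ← uIoc_of_le Real.two_pi_pos.le]
    exact hint.integral_prod_right.const_mul _
  · rcases eq_or_ne (ρ y) 0 with hy | hy
    · simp [hy]
    · exact mul_le_mul_of_nonneg_left (h y hy) (hρ_nonneg y)

end Convolution

variable {E : Type*} [NormedAddCommGroup E] [NormedSpace ℂ E] {Ω : Set E} {φ : E → ℝ}

lemma PSHOn.indicator_le_circleAverage (hφ : PSHOn φ Ω) {S : Set E} (hS : S ⊆ Ω) {x b : E}
    {z₀ : ℂ} {t : ℝ} (ht : 0 < t) (hdisc : ∀ z ∈ closedBall z₀ t, x + (z - z₀) • b ∈ S) :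
    S.indicator φ x ≤ Real.circleAverage (fun z => S.indicator φ (x + (z - z₀) • b)) z₀ t := by
  have hline : ∀ z : ℂ, x + (z - z₀) • b = x - z₀ • b + z • b := fun z => by
    rw [sub_smul]; abel
  have hx : x ∈ S := by simpa using hdisc z₀ (mem_closedBall_self ht.le)
  calc S.indicator φ x = φ (x - z₀ • b + z₀ • b) := by
        rw [indicator_of_mem hx, sub_add_cancel]
    _ ≤ Real.circleAverage (fun z => φ (x - z₀ • b + z • b)) z₀ t :=
        hφ.2 (x - z₀ • b) b z₀ t ht fun z hz => hS (hline z ▸ hdisc z hz)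
    _ = Real.circleAverage (fun z => S.indicator φ (x + (z - z₀) • b)) z₀ t := by
        refine Real.circleAverage_congr_sphere fun z hz => ?_
        rw [abs_of_pos ht] at hz
        rw [indicator_of_mem (hdisc z (sphere_subset_closedBall hz)), hline]

variable [FiniteDimensional ℂ E]

lemma PSHOn.asympSubmeanAt_convolution_indicator [MeasurableSpace E] [BorelSpace E] {μ : Measure E}
    [μ.IsAddHaarMeasure] (hφ : PSHOn φ Ω) {S : Set E}
    (hS : IsCompact S) (hSΩ : S ⊆ Ω) (hφ_cont : ContinuousOn φ S) (η : ContDiffBump (0 : E))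
    {x : E} (hx : closedBall x (2 * η.rOut) ⊆ S) (b : E) (z₀ : ℂ) :
    AsympSubmeanAt (fun z =>
      (η.normed μ ⋆[ContinuousLinearMap.lsmul ℝ ℝ, μ] S.indicator φ) (x + (z - z₀) • b)) z₀ := by
  have : ProperSpace E := FiniteDimensional.proper ℂ E
  have hmeas := measurable_indicator_of_continuousOn hφ_cont hS.measurableSet
  obtain ⟨M, hM⟩ := exists_norm_indicator_le_of_continuousOn hφ_cont hS
  have hloc : LocallyIntegrable (S.indicator φ) μ :=
    ((hφ_cont.integrableOn_compact hS).integrable_indicator hS.measurableSet).locallyIntegrable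
  have hcont := η.hasCompactSupport_normed.continuous_convolution_left
    (ContinuousLinearMap.lsmul ℝ ℝ) (η.continuous_normed (μ := μ)) hloc
  have hsmall : ∀ᶠ t in 𝓝[>] (0 : ℝ), t * ‖b‖ < η.rOut := by
    have htendsto : Tendsto (fun t : ℝ => t * ‖b‖) (𝓝 0) (𝓝 0) := by
      simpa using (continuous_mul_const ‖b‖).tendsto 0
    exact nhdsWithin_le_nhds (htendsto.eventually_lt_const η.rOut_pos)
  refine ⟨Eventually.of_forall fun z => hcont.continuousAt.comp (by fun_prop), fun k hk => ?_⟩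
  filter_upwards [hsmall, self_mem_nhdsWithin] with t htb ht
  refine (sub_le_self _ (by positivity)).trans ?_
  rw [sub_self, zero_smul, add_zero]
  refine convolution_le_circleAverage_convolution η.integrable_normed η.nonneg_normed hmeas hM
    (by fun_prop) fun y hy => ?_
  simp only [add_sub_right_comm x]
  refine hφ.indicator_le_circleAverage hSΩ ht fun z hz => hx ?_
  rw [η.support_normed_eq, mem_ball_zero_iff] at hy
  have hzb : ‖(z - z₀) • b‖ ≤ t * ‖b‖ := by
    rw [norm_smul]
    gcongr
    exact mem_closedBall_iff_norm.1 hz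
  calc dist (x - y + (z - z₀) • b) x = ‖(z - z₀) • b - y‖ := by
        rw [dist_eq_norm]; congr 1; abel
    _ ≤ 2 * η.rOut := by linarith [norm_sub_le ((z - z₀) • b) y]

theorem PSHOn.exists_contDiff_approx (hφ : PSHOn φ Ω) (hΩ : IsOpen Ω)
    (hφ_cont : ContinuousOn φ Ω) {K : Set E} (hK : IsCompact K) (hKΩ : K ⊆ Ω)
    {ε : ℝ} (hε : 0 < ε) :
    ∃ ψ : E → ℝ, ContDiff ℝ 1 ψ ∧ (∀ x ∈ K, |ψ x - φ x| ≤ ε) ∧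
      ∀ x ∈ K, ∀ (b : E) (z₀ : ℂ), AsympSubmeanAt (fun z => ψ (x + (z - z₀) • b)) z₀ := by
  let _ : MeasurableSpace E := borel E
  have : BorelSpace E := ⟨rfl⟩
  have : ProperSpace E := FiniteDimensional.proper ℝ E
  let μ : Measure E := Measure.addHaar
  obtain ⟨δ₁, hδ₁, hthick⟩ := hK.exists_cthickening_subset_open hΩ hKΩ
  set S := cthickening δ₁ K
  have hS : IsCompact S := hK.cthickening
  have hφS : ContinuousOn φ S := hφ_cont.mono hthick
  obtain ⟨δ₂, hδ₂, hunif⟩ :=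
    Metric.uniformContinuousOn_iff_le.1 (hS.uniformContinuousOn_of_continuous hφS) ε hε
  obtain ⟨δ, hδ, hδ_lt⟩ := exists_between (lt_min (half_pos hδ₁) hδ₂)
  let η : ContDiffBump (0 : E) := ⟨δ / 2, δ, half_pos hδ, half_lt_self hδ⟩
  have hball : ∀ x ∈ K, closedBall x (2 * δ) ⊆ S := fun x hx y hy =>
    mem_cthickening_of_dist_le y x δ₁ K hx
      ((mem_closedBall.1 hy).trans (by linarith [hδ_lt.trans_le (min_le_left _ _)]))
  have hmeas := measurable_indicator_of_continuousOn hφS hS.measurableSet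
  refine ⟨η.normed μ ⋆[ContinuousLinearMap.lsmul ℝ ℝ, μ] S.indicator φ, ?_, fun x hx => ?_,
    fun x hx b z₀ => hφ.asympSubmeanAt_convolution_indicator hS hthick hφS η (hball x hx) b z₀⟩
  · refine η.hasCompactSupport_normed.contDiff_convolution_left _ η.contDiff_normed ?_
    exact ((hφS.integrableOn_compact hS).integrable_indicator hS.measurableSet).locallyIntegrable
  · have hxS : x ∈ S := self_subset_cthickening K hx
    rw [← Real.dist_eq, ← indicator_of_mem hxS φ]
    refine η.dist_normed_convolution_le hmeas.aestronglyMeasurable fun y hy => ?_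
    have hyx : dist y x < δ := hy
    have hyS : y ∈ S := hball x hx (mem_closedBall.2 (by linarith))
    rw [indicator_of_mem hyS, indicator_of_mem hxS]
    exact hunif y hyS x hxS (hyx.le.trans (hδ_lt.le.trans (min_le_right _ _)))

end Smoothing

section Kobayashi

variable {E : Type*} [NormedAddCommGroup E] [NormedSpace ℂ E] {Ω : Set E} {φ : E → ℝ}
  {f : ℂ → E} {s r R α β M : ℝ}

lemma norm_deriv_mul_le_of_asympSubmeanAt [CompleteSpace E] {u : ℂ → ℝ} (hs : 0 < s)
    (hf : DiffContOnCl ℂ f (ball 0 s)) (hu_cont : ContinuousOn u (closedBall 0 s))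
    (hu_sub : ∀ z ∈ ball 0 s, AsympSubmeanAt u z) (hr : 0 < r) (hrR : r ≤ R)
    (hαβ : R * Real.exp α < r * Real.exp β)
    (hβ : ∀ z ∈ closedBall 0 s, ‖f z - f 0‖ ≤ r → β ≤ u z)
    (hα : ∀ z ∈ closedBall 0 s, ‖f z - f 0‖ = R → u z ≤ α)
    (hM : ∀ z ∈ closedBall 0 s, u z ≤ M) :
    ‖deriv f 0‖ * s ≤ R * Real.exp (M - β) := by
  have hR : 0 < R := hr.trans_le hrR
  have h0 : (0 : ℂ) ∈ closedBall 0 s := mem_closedBall_self hs.le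
  have hβ0 : β ≤ u 0 := hβ 0 h0 (by simpa using hr.le)
  obtain ⟨κ, hακ, hκβ⟩ := exists_between hαβ
  have hκM : κ ≤ R * Real.exp M := by
    refine hκβ.le.trans ?_
    gcongr
    exact hβ0.trans (hM 0 h0)
  have hweight : Real.exp (u 0) * ‖deriv f 0‖ * s ≤ R * Real.exp M := by
    refine mul_norm_deriv_mul_le_of_weight (w := fun z => Real.exp (u z)) hs hf
      (Real.continuous_exp.comp_continuousOn hu_cont) (fun z => Real.exp_pos _)
      (by simpa only [Real.log_exp] using hu_sub) hr hrR
      (lt_trans (by positivity) hακ) hκM (fun z hz hzr => ?_) (fun z hz hzR => ?_) (fun z hz => ?_)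
    · rw [mul_comm]
      exact hκβ.trans_le (by gcongr; exact hβ z hz hzr.le)
    · rw [mul_comm]
      exact lt_of_le_of_lt (by gcongr; exact hα z hz hzR) hακ
    · rw [mul_comm]
      gcongr
      exact hM z hz
  rw [Real.exp_sub, ← mul_div_assoc, le_div_iff₀ (Real.exp_pos β)]
  calc ‖deriv f 0‖ * s * Real.exp β ≤ ‖deriv f 0‖ * s * Real.exp (u 0) := by gcongr
    _ ≤ R * Real.exp M := by linarith

lemma PSHOn.const_mul (hφ : PSHOn φ Ω) {c : ℝ} (hc : 0 ≤ c) : PSHOn (fun z => c * φ z) Ω := by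
  refine ⟨?_, fun a b z₀ t ht hdisc => ?_⟩
  · exact (continuous_const_mul c).comp_upperSemicontinuousOn hφ.1
      (monotone_mul_left_of_nonneg hc)
  · rw [intervalIntegral.integral_const_mul, mul_left_comm]
    exact mul_le_mul_of_nonneg_left (hφ.2 a b z₀ t ht hdisc) hc

theorem PSHOn.norm_deriv_mul_le [FiniteDimensional ℂ E] (hφ : PSHOn φ Ω) (hΩ : IsOpen Ω)
    (hφ_cont : ContinuousOn φ Ω) (hs : 0 < s) (hf : DiffContOnCl ℂ f (ball 0 s))
    (hfΩ : MapsTo f (closedBall 0 s) Ω) (hr : 0 < r) (hrR : r ≤ R)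
    (hαβ : R * Real.exp α < r * Real.exp β) (hβ : ∀ z ∈ Ω, ‖z - f 0‖ ≤ r → β ≤ φ z)
    (hα : ∀ z ∈ Ω, ‖z - f 0‖ = R → φ z ≤ α) (hM : ∀ z ∈ Ω, φ z ≤ M) :
    ‖deriv f 0‖ * s ≤ R * Real.exp (M - β) := by
  have : CompleteSpace E := FiniteDimensional.complete ℂ E
  have hbound : ∀ᶠ ε in 𝓝[>] (0 : ℝ),
      ‖deriv f 0‖ * s ≤ R * Real.exp (M + ε - (β - ε)) := by
    have hαβ' : ∀ᶠ ε in 𝓝 (0 : ℝ), R * Real.exp (α + ε) < r * Real.exp (β - ε) :=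
      ContinuousAt.eventually_lt (by fun_prop) (by fun_prop) (by simpa using hαβ)
    filter_upwards [nhdsWithin_le_nhds hαβ', self_mem_nhdsWithin] with ε hε_lt hε
    obtain ⟨ψ, hψ, hψφ, hψ_sub⟩ := hφ.exists_contDiff_approx hΩ hφ_cont
      ((isCompact_closedBall 0 s).image_of_continuousOn hf.continuousOn_ball)
      (image_subset_iff.2 hfΩ) hε
    have hclose : ∀ z ∈ closedBall 0 s, |ψ (f z) - φ (f z)| ≤ ε := fun z hz =>
      hψφ _ (mem_image_of_mem f hz)
    refine norm_deriv_mul_le_of_asympSubmeanAt (u := fun z => ψ (f z)) hs hf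
      (hψ.continuous.comp_continuousOn hf.continuousOn_ball) (fun z hz => ?_) hr hrR hε_lt
      (fun z hz hzr => ?_) (fun z hz hzR => ?_) (fun z hz => ?_)
    · exact AsympSubmeanAt.comp_analyticAt hψ
        (hf.differentiableOn.analyticAt (isOpen_ball.mem_nhds hz))
        (hψ_sub _ (mem_image_of_mem f (ball_subset_closedBall hz)) _ z)
    · linarith [neg_le_of_abs_le (hclose z hz), hβ _ (hfΩ hz) hzr]
    · linarith [le_of_abs_le (hclose z hz), hα _ (hfΩ hz) hzR]
    · linarith [le_of_abs_le (hclose z hz), hM _ (hfΩ hz)]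
  have hlim : Tendsto (fun ε => R * Real.exp (M + ε - (β - ε))) (𝓝[>] 0)
      (𝓝 (R * Real.exp (M - β))) := by
    have hcont : Continuous fun ε : ℝ => R * Real.exp (M + ε - (β - ε)) := by fun_prop
    simpa using (hcont.tendsto 0).mono_left nhdsWithin_le_nhds
  exact ge_of_tendsto hlim hbound

lemma le_kob_of_forall_norm_deriv_mul_le (hΩ : IsOpen Ω) {q : E} (hq : q ∈ Ω) {B : ℝ}
    (hB : 0 < B)
    (h : ∀ s > 0, ∀ f : ℂ → E, DiffContOnCl ℂ f (ball 0 s) → MapsTo f (closedBall 0 s) Ω →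
      f 0 = q → ‖deriv f 0‖ * s ≤ B) (v : E) :
    B⁻¹ * ‖v‖ ≤ kob Ω q v := by
  refine le_csInf ?_ ?_
  · have hline : Tendsto (fun z : ℂ => q + z • v) (𝓝 0) (𝓝 q) := by
      have hcont : Continuous fun z : ℂ => q + z • v := by fun_prop
      simpa using hcont.tendsto 0
    obtain ⟨δ, hδ, hδΩ⟩ := Metric.eventually_nhds_iff_ball.1 (hline (hΩ.mem_nhds hq))
    refine ⟨_, δ, hδ, rfl, fun z => q + z • v, by fun_prop, by simp, ?_, hδΩ⟩
    simpa using (((hasDerivAt_id (0 : ℂ)).smul_const v).const_add q).deriv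
  · rintro _ ⟨ρ, hρ, rfl, f, hf, rfl, rfl, hfΩ⟩
    have hlt : ∀ᶠ s in 𝓝[<] ρ, ‖deriv f 0‖ * s ≤ B := by
      filter_upwards [Ioo_mem_nhdsLT hρ] with s hs
      have hsρ : closedBall (0 : ℂ) s ⊆ ball 0 ρ := closedBall_subset_ball hs.2
      exact h s hs.1 f (hf.diffContOnCl_ball hsρ) (hfΩ.mono_left hsρ) rfl
    have hle : ‖deriv f 0‖ * ρ ≤ B :=
      le_of_tendsto ((continuous_const_mul _).continuousWithinAt.tendsto) hlt
    rwa [le_div_iff₀ hρ, mul_assoc, inv_mul_le_one₀ hB]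

lemma exists_mul_exp_lt_mul_exp (hr : 0 < r) (hαβ : α < β) (R : ℝ) :
    ∃ C ≥ 0, R * Real.exp (C * α) < r * Real.exp (C * β) := by
  have hexp : Tendsto (fun C => Real.exp (C * (β - α))) atTop atTop :=
    Real.tendsto_exp_atTop.comp (tendsto_id.atTop_mul_const (sub_pos.2 hαβ))
  obtain ⟨C, hC, hCR⟩ := ((eventually_ge_atTop 0).and (hexp.eventually_gt_atTop (R / r))).exists
  refine ⟨C, hC, ?_⟩
  rwa [mul_sub, Real.exp_sub, div_lt_div_iff₀ hr (Real.exp_pos _), mul_comm (Real.exp _)] at hCR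

theorem PSHOn.exists_mul_norm_le_kob [FiniteDimensional ℂ E] (hφ : PSHOn φ Ω) (hΩ : IsOpen Ω)
    (hφ_cont : ContinuousOn φ Ω) (hM : ∀ z ∈ Ω, φ z ≤ M) {p : E} (hp : p ∈ Ω) (hαp : α < φ p)
    (hα : ∀ z ∈ Ω, R ≤ ‖z‖ → φ z ≤ α) :
    ∃ U ∈ 𝓝 p, ∃ c > 0, ∀ q ∈ U ∩ Ω, ∀ v, c * ‖v‖ ≤ kob Ω q v := by
  obtain ⟨β, hαβ, hβp⟩ := exists_between hαp
  obtain ⟨δ, hδ, hφβ⟩ := Metric.eventually_nhds_iff.1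
    ((hφ_cont.continuousAt (hΩ.mem_nhds hp)).eventually_const_lt hβp)
  set r := δ / 2 with hr_def
  have hr : 0 < r := half_pos hδ
  set R' := r + (|R| + ‖p‖ + r) with hR'
  have hrR' : r ≤ R' := le_add_of_nonneg_right (by positivity)
  obtain ⟨C, hC, hC_lt⟩ := exists_mul_exp_lt_mul_exp hr hαβ R'
  have hB : 0 < R' * Real.exp (C * M - C * β) := by positivity
  refine ⟨ball p r, ball_mem_nhds p hr, _, inv_pos.2 hB, fun q ⟨hqp, hq⟩ =>
    le_kob_of_forall_norm_deriv_mul_le hΩ hq hB ?_⟩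
  rintro s hs f hf hfΩ rfl
  have hqp' : ‖f 0 - p‖ < r := mem_ball_iff_norm.1 hqp
  refine (hφ.const_mul hC).norm_deriv_mul_le hΩ (hφ_cont.const_mul C) hs hf hfΩ hr hrR' hC_lt
    (fun z _ hzr => ?_) (fun z hz hzR => ?_) (fun z hz => ?_)
  · have hzp : dist z p < δ := by
      rw [dist_eq_norm]
      linarith [norm_sub_le_norm_sub_add_norm_sub z (f 0) p]
    exact mul_le_mul_of_nonneg_left (hφβ hzp).le hC
  · have hzR' : R ≤ ‖z‖ := by
      linarith [norm_sub_le z (f 0), norm_le_norm_add_norm_sub' (f 0) p, le_abs_self R]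
    exact mul_le_mul_of_nonneg_left (hα z hz hzR') hC
  · exact mul_le_mul_of_nonneg_left (hM z hz) hC

end Kobayashi

theorem stmt_0_general {E : Type*} [NormedAddCommGroup E] [NormedSpace ℂ E]
    [FiniteDimensional ℂ E] (Ω : Set E) (hopen : IsOpen Ω) (φ : E → ℝ)
    (hbdd : ∃ M : ℝ, ∀ z ∈ Ω, φ z ≤ M) (hcont : ContinuousOn φ Ω) (hpsh : PSHOn φ Ω)
    (hanti : ∀ p ∈ Ω, ∃ α < φ p, ∃ R : ℝ, ∀ z ∈ Ω, R ≤ ‖z‖ → φ z ≤ α) :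
    KobayashiHyperbolic Ω := by
  obtain ⟨M, hM⟩ := hbdd
  intro p hp
  obtain ⟨α, hαp, R, hα⟩ := hanti p hp
  exact hpsh.exists_mul_norm_le_kob hopen hcont hM hp hαp hα

/-- If an unbounded domain in ℂⁿ admits a strong antipeak function at infinity
(a bounded continuous positive plurisubharmonic function tending to 0 at infinity),
then it is Kobayashi hyperbolic. -/
theorem stmt_0 {n : ℕ} (Ω : Set (EuclideanSpace ℂ (Fin n)))
    (hopen : IsOpen Ω) (hconn : IsConnected Ω)
    (hunbounded : ¬ Bornology.IsBounded Ω)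
    (φ : EuclideanSpace ℂ (Fin n) → ℝ)
    (hbdd : ∃ M : ℝ, ∀ z ∈ Ω, φ z ≤ M)
    (hcont : ContinuousOn φ Ω)
    (hpos : ∀ z ∈ Ω, 0 < φ z)
    (hpsh : PSHOn φ Ω)
    (hanti : ∀ ε > 0, ∃ R : ℝ, ∀ z ∈ Ω, R ≤ ‖z‖ → φ z < ε) :
    KobayashiHyperbolic Ω := by
  refine stmt_0_general Ω hopen φ hbdd hcont hpsh fun p hp =>
    ⟨φ p / 2, half_lt_self (hpos p hp), ?_⟩
  exact (hanti _ (half_pos (hpos p hp))).imp fun R hR z hz hzR => (hR z hz hzR).le
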